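/- arXiv:2303.08292 — 3 statements merged into one kernel-verified Lean document; each statement's English description precedes it below -/
import Mathlib

section
/- Let 0 ≤ x ≤ r₁ ≤ r₂ be real numbers with x < r₁. Then the Abel transform of the indicator function of the annulus [r₁, r₂] evaluated at x, namely 2 ∫_{r₁}^{r₂} r / √(r² − x²) dr, equals 2(√(r₂² − x²) − √(r₁² − x²)), and this number equals the one-dimensional Lebesgue measure of the chord set {z ∈ ℝ : r₁² ≤ z² + x² ≤ r₂²}. (This is the paper's claim that the discretized projection matrix coefficient, defined as the length of the intersection of a ray with an annulus, agrees with the exact Abel transform of the annulus's characteristic function.) -/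
open Real MeasureTheory intervalIntegral

/-!
For `r > |x|` the integrand `r / √(r² - x²)` is the derivative of `√(r² - x²)`. Being nonnegative,
it is integrable up to the singular endpoint `r = |x|`, so the fundamental theorem of calculus
applies there too. On the other side, the line at offset `x` meets the disc of radius `r` in an
interval of half-length `√(r² - x²)`, so the chord set is a difference of two concentric intervals.
-/

section AbelIntegral

variable {x r a b : ℝ}

theorem hasDerivAt_sqrt_sq_sub_sq (hxr : |x| < |r|) :
    HasDerivAt (fun s ↦ √(s ^ 2 - x ^ 2)) (r / √(r ^ 2 - x ^ 2)) r := by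
  have hne : r ^ 2 - x ^ 2 ≠ 0 := (sub_pos.mpr (sq_lt_sq.mpr hxr)).ne'
  have hsq : HasDerivAt (fun s ↦ s ^ 2 - x ^ 2) (2 * r) r := by
    simpa using (hasDerivAt_pow 2 r).sub_const (x ^ 2)
  simpa only [mul_div_mul_left _ _ (two_ne_zero' ℝ)] using hsq.sqrt hne

theorem integral_div_sqrt_sq_sub_sq (ha : |x| ≤ a) (hb : |x| ≤ b) :
    ∫ r in a..b, r / √(r ^ 2 - x ^ 2) = √(b ^ 2 - x ^ 2) - √(a ^ 2 - x ^ 2) := by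
  have hlt : ∀ r ∈ Set.Ioo (min a b) (max a b), |x| < r := fun r hr ↦
    (le_min ha hb).trans_lt hr.1
  have hcont : ContinuousOn (fun r ↦ √(r ^ 2 - x ^ 2)) (Set.uIcc a b) := by fun_prop
  have hderiv : ∀ r ∈ Set.Ioo (min a b) (max a b),
      HasDerivAt (fun s ↦ √(s ^ 2 - x ^ 2)) (r / √(r ^ 2 - x ^ 2)) r := fun r hr ↦
    hasDerivAt_sqrt_sq_sub_sq ((hlt r hr).trans_le (le_abs_self r))
  have hnonneg : ∀ r ∈ Set.Ioo (min a b) (max a b), 0 ≤ r / √(r ^ 2 - x ^ 2) := fun r hr ↦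
    div_nonneg ((abs_nonneg x).trans (hlt r hr).le) (sqrt_nonneg _)
  exact integral_eq_sub_of_hasDeriv_right hcont (fun r hr ↦ (hderiv r hr).hasDerivWithinAt)
    (intervalIntegrable_deriv_of_nonneg hcont hderiv hnonneg)

end AbelIntegral

section ChordLength

theorem volume_closedBall_sdiff_ball (c : ℝ) {a b : ℝ} (ha : 0 ≤ a) (hab : a ≤ b) :
    volume (Metric.closedBall c b \ Metric.ball c a) = ENNReal.ofReal (2 * (b - a)) := by
  have hsub : Metric.ball c a ⊆ Metric.closedBall c b :=
    Metric.ball_subset_closedBall.trans (Metric.closedBall_subset_closedBall hab)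
  rw [measure_sdiff hsub measurableSet_ball.nullMeasurableSet measure_ball_lt_top.ne,
    Real.volume_closedBall, Real.volume_ball, ← ENNReal.ofReal_sub _ (by positivity), mul_sub]

/-- The chord cut out of the annulus `r₁ ≤ √(z² + x²) ≤ r₂` by the line at offset `x` from the
center, parametrized by the coordinate `z` along the line. Squared radii avoid the square root, so
only `|r₁|` and `|r₂|` matter. -/
def chordSet (x r₁ r₂ : ℝ) : Set ℝ :=
  {z | r₁ ^ 2 ≤ z ^ 2 + x ^ 2 ∧ z ^ 2 + x ^ 2 ≤ r₂ ^ 2}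

variable {x r₁ r₂ : ℝ}

theorem chordSet_eq_closedBall_sdiff_ball (hx : |x| ≤ |r₂|) :
    chordSet x r₁ r₂ =
      Metric.closedBall 0 √(r₂ ^ 2 - x ^ 2) \ Metric.ball 0 √(r₁ ^ 2 - x ^ 2) := by
  ext z
  have houter : |z| ≤ √(r₂ ^ 2 - x ^ 2) ↔ z ^ 2 + x ^ 2 ≤ r₂ ^ 2 := by
    rw [le_sqrt (abs_nonneg z) (sub_nonneg.mpr (sq_le_sq.mpr hx)), sq_abs, le_sub_iff_add_le]
  have hinner : √(r₁ ^ 2 - x ^ 2) ≤ |z| ↔ r₁ ^ 2 ≤ z ^ 2 + x ^ 2 := by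
    rw [sqrt_le_left (abs_nonneg z), sq_abs, sub_le_iff_le_add]
  rw [Set.mem_sdiff, mem_closedBall_zero_iff, mem_ball_zero_iff, not_lt, norm_eq_abs, houter,
    hinner, and_comm]
  rfl

theorem volume_chordSet (hx : |x| ≤ |r₂|) (hr : |r₁| ≤ |r₂|) :
    volume (chordSet x r₁ r₂) =
      ENNReal.ofReal (2 * (√(r₂ ^ 2 - x ^ 2) - √(r₁ ^ 2 - x ^ 2))) := by
  rw [chordSet_eq_closedBall_sdiff_ball hx]
  exact volume_closedBall_sdiff_ball 0 (sqrt_nonneg _)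
    (sqrt_le_sqrt (sub_le_sub_right (sq_le_sq.mpr hr) _))

theorem chordSet_max_abs (hr₁ : 0 ≤ r₁) : chordSet x (max |x| r₁) r₂ = chordSet x r₁ r₂ := by
  have hmax : max |x| r₁ ^ 2 = max (x ^ 2) (r₁ ^ 2) := by
    rw [← sq_abs x]
    exact (pow_left_monotoneOn (n := 2)).map_max (abs_nonneg x) hr₁
  ext z
  have hx : x ^ 2 ≤ z ^ 2 + x ^ 2 := le_add_of_nonneg_left (sq_nonneg z)
  simp only [chordSet, Set.mem_ofPred_eq, hmax, max_le_iff, hx, true_and]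

end ChordLength

theorem abel_annulus_eq_chord_length_general (x r₁ r₂ : ℝ) (hr₁ : 0 ≤ r₁) (hr : r₁ ≤ r₂)
    (hx : |x| ≤ r₂) :
    2 * ∫ r in max |x| r₁..r₂, r / √(r ^ 2 - x ^ 2) =
        2 * (√(r₂ ^ 2 - x ^ 2) - √(max |x| r₁ ^ 2 - x ^ 2)) ∧
      volume {z : ℝ | r₁ ^ 2 ≤ z ^ 2 + x ^ 2 ∧ z ^ 2 + x ^ 2 ≤ r₂ ^ 2} =
        ENNReal.ofReal (2 * (√(r₂ ^ 2 - x ^ 2) - √(max |x| r₁ ^ 2 - x ^ 2))) := by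
  have hmax : |max (|x|) r₁| ≤ |r₂| := abs_le_abs_of_nonneg (le_max_of_le_right hr₁) (max_le hx hr)
  constructor
  · rw [integral_div_sqrt_sq_sub_sq (le_max_left _ _) hx]
  · rw [← volume_chordSet (hx.trans (le_abs_self r₂)) hmax, chordSet_max_abs hr₁, chordSet]

/-- The discretized projection matrix coefficient (the length of the intersection of a ray
at offset `x` from the symmetry axis with the annulus `[r₁, r₂]`) agrees with the exact
Abel transform of the annulus's characteristic function, in the case where the ray offset
lies strictly inside the inner radius. -/
theorem abel_annulus_eq_chord_length (x r₁ r₂ : ℝ) (hx : 0 ≤ x) (hxr : x < r₁)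
    (hr : r₁ ≤ r₂) :
    2 * ∫ r in r₁..r₂, r / Real.sqrt (r ^ 2 - x ^ 2) =
        2 * (Real.sqrt (r₂ ^ 2 - x ^ 2) - Real.sqrt (r₁ ^ 2 - x ^ 2)) ∧
      volume {z : ℝ | r₁ ^ 2 ≤ z ^ 2 + x ^ 2 ∧ z ^ 2 + x ^ 2 ≤ r₂ ^ 2} =
        ENNReal.ofReal (2 * (Real.sqrt (r₂ ^ 2 - x ^ 2) - Real.sqrt (r₁ ^ 2 - x ^ 2))) := by
  simpa only [abs_of_nonneg hx, max_eq_right hxr.le] using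
    abel_annulus_eq_chord_length_general x r₁ r₂ (hx.trans hxr.le) hr
      ((abs_of_nonneg hx).trans_le (hxr.le.trans hr))
end

section
/- Let D ≥ 0 be a real number, S = 27·D + 2, C = ((S + √(S² − 4))/2)^{1/3} the real cube root, and τ = (C + 1 + 1/C)/3. Then τ ≥ 1 and τ³ − τ² = D. (This is the correctness of the closed-form Cardano expression for the scaling factor τ^{(k)} used in the h-update of the paper's ADMM algorithm.) -/
open Real

/-!
Writing `3 * τ = t + 1` depresses `τ ^ 3 - τ ^ 2 = D` to `t ^ 3 - 3 * t = 27 * D + 2`, and the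
substitution `t = C + C⁻¹` turns the left-hand side into `C ^ 3 + (C ^ 3)⁻¹`. So `C ^ 3` has to be
a root of the quadratic `z ^ 2 - (27 * D + 2) * z + 1`, whose larger root is the radicand in the
definition of `C`. The bound `1 ≤ τ` is the inequality `2 ≤ C + C⁻¹`.
-/

section CommRing

variable {R : Type*} [CommRing R] {x y τ : R}

theorem add_pow_three_sub_three_mul_add_of_mul_eq_one (hxy : x * y = 1) :
    (x + y) ^ 3 - 3 * (x + y) = x ^ 3 + y ^ 3 := by
  linear_combination 3 * (x + y) * hxy

theorem twentySeven_mul_pow_three_sub_sq (τ : R) :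
    27 * (τ ^ 3 - τ ^ 2) = (3 * τ - 1) ^ 3 - 3 * (3 * τ - 1) - 2 := by
  ring

theorem twentySeven_mul_pow_three_sub_sq_of_mul_eq_one (hxy : x * y = 1)
    (hτ : 3 * τ = x + y + 1) : 27 * (τ ^ 3 - τ ^ 2) = x ^ 3 + y ^ 3 - 2 := by
  rw [twentySeven_mul_pow_three_sub_sq, hτ, add_sub_cancel_right,
    add_pow_three_sub_three_mul_add_of_mul_eq_one hxy]

end CommRing

theorem two_le_add_inv_of_pos {K : Type*} [Field K] [LinearOrder K] [IsStrictOrderedRing K]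
    {a : K} (ha : 0 < a) : 2 ≤ a + a⁻¹ := by
  have sq_div_eq : (a - 1) ^ 2 / a = a + a⁻¹ - 2 := by
    field_simp
    ring
  have sq_div_nonneg : 0 ≤ (a - 1) ^ 2 / a := by positivity
  linarith

theorem half_add_sqrt_sq_sub_four_add_inv {s : ℝ} (hs : 4 ≤ s ^ 2) :
    (s + √(s ^ 2 - 4)) / 2 + ((s + √(s ^ 2 - 4)) / 2)⁻¹ = s := by
  have mul_conj : (s + √(s ^ 2 - 4)) / 2 * ((s - √(s ^ 2 - 4)) / 2) = 1 := by
    linear_combination -sq_sqrt (sub_nonneg.2 hs) / 4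
  rw [inv_eq_of_mul_eq_one_right mul_conj]
  ring

/-- Correctness of the closed-form Cardano expression for the scaling factor `τ` used in
the h-update of the paper's ADMM algorithm: `τ ≥ 1` and `τ³ − τ² = D`. -/
theorem cardano_tau_correct (D : ℝ) (hD : 0 ≤ D)
    (C τ : ℝ)
    (hC : C = ((27 * D + 2 + Real.sqrt ((27 * D + 2) ^ 2 - 4)) / 2) ^ ((1 : ℝ) / 3))
    (hτ : τ = (C + 1 + 1 / C) / 3) :
    1 ≤ τ ∧ τ ^ 3 - τ ^ 2 = D := by
  have radicand_pos : 0 < (27 * D + 2 + √((27 * D + 2) ^ 2 - 4)) / 2 := by positivity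
  have C_pos : 0 < C := hC ▸ rpow_pos_of_pos radicand_pos _
  have C_cubed : C ^ 3 = (27 * D + 2 + √((27 * D + 2) ^ 2 - 4)) / 2 := by
    rw [hC, one_div]
    exact rpow_inv_natCast_pow radicand_pos.le three_ne_zero
  have cubes_add : C ^ 3 + C⁻¹ ^ 3 = 27 * D + 2 := by
    rw [inv_pow, C_cubed]
    exact half_add_sqrt_sq_sub_four_add_inv (by nlinarith)
  have three_mul_τ : 3 * τ = C + C⁻¹ + 1 := by
    rw [hτ]
    ring
  constructor
  · linarith [two_le_add_inv_of_pos C_pos]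
  · have cubic := twentySeven_mul_pow_three_sub_sq_of_mul_eq_one
      (mul_inv_cancel₀ C_pos.ne') three_mul_τ
    linarith
end

section
/- Let δ > 0 and let f : ℝ → ℝ be continuous on [0, δ]. If for every x with 0 ≤ x ≤ δ the Abel transform vanishes, i.e. ∫_{x}^{δ} r f(r) / √(r² − x²) dr = 0, then f(r) = 0 for all r ∈ [0, δ]. (This is the injectivity of the single-view axially-symmetric forward operator, the claim Null(A) = {0} used to verify the hypothesis Null(∇) ∩ Null(A) = {0} of the paper's convergence theorem for its ADMM algorithm.) -/
open Real intervalIntegral Set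

/-!
Integrating the Abel transform `A f` against the dual kernel `x / √(x² - s²)` undoes it up to one
integration. Indeed, by Fubini the inner integral `∫ x in s..r, x / (√(x² - s²) √(r² - x²))` is the
total mass `π / 2` of an unnormalised arcsine law, whatever `0 ≤ s < r` are, so
`∫ x in s..δ, x / √(x² - s²) * A f x = π / 2 * ∫ r in s..δ, r * f r`.
If `A f` vanishes then so do all the tail integrals on the right, and Lebesgue differentiation in
`s` gives `f = 0` almost everywhere, hence everywhere if `f` is continuous.
-/

open MeasureTheory

/-- The Abel transform of `f` on `[0, δ]` at offset `x`: the integral of the radial profile `f`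
along half of the chord at distance `x` from the centre. The values of `f` may lie in any real
normed space. -/
noncomputable def abelTransform {E : Type*} [NormedAddCommGroup E] [NormedSpace ℝ E]
    (δ : ℝ) (f : ℝ → E) (x : ℝ) : E :=
  ∫ r in x..δ, (√(r ^ 2 - x ^ 2))⁻¹ • r • f r

/-- The product of the dual kernel `x / √(x² - s²)` and the kernel `1 / √(r² - x²)` of the Abel
transform. Since `√` is zero on negative numbers and `0⁻¹ = 0`, it vanishes unless
`|s| < |x| < |r|`, which encodes the domain of integration. -/
noncomputable def abelKernel (s r x : ℝ) : ℝ :=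
  x / √(x ^ 2 - s ^ 2) * (√(r ^ 2 - x ^ 2))⁻¹

/-- An antiderivative of `abelKernel s r` on `(s, r)`, found by substituting `t = x ^ 2`: up to
affine normalisation, the distribution function at `t` of the arcsine law on `[s ^ 2, r ^ 2]`. -/
noncomputable def abelKernelPrimitive (s r x : ℝ) : ℝ :=
  arcsin ((2 * x ^ 2 - s ^ 2 - r ^ 2) / (r ^ 2 - s ^ 2)) / 2

section Kernel

variable {s r x δ : ℝ}

lemma inv_sqrt_sq_sub_sq_eq_zero (hr : 0 ≤ r) (hrx : r ≤ x) : (√(r ^ 2 - x ^ 2))⁻¹ = 0 := by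
  rw [sqrt_eq_zero_of_nonpos (sub_nonpos.2 (pow_le_pow_left₀ hr hrx 2)), inv_zero]

lemma abelKernel_nonneg (hx : 0 ≤ x) : 0 ≤ abelKernel s r x := by
  unfold abelKernel
  positivity

lemma abelKernel_eq_zero (hr : 0 ≤ r) (hrx : r ≤ x) : abelKernel s r x = 0 := by
  rw [abelKernel, inv_sqrt_sq_sub_sq_eq_zero hr hrx, mul_zero]

lemma measurable_abelKernel (s : ℝ) : Measurable fun p : ℝ × ℝ ↦ abelKernel s p.2 p.1 := by
  unfold abelKernel
  fun_prop

lemma hasDerivAt_arcsin_affine {a b t : ℝ} (ht : t ∈ Ioo a b) :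
    HasDerivAt (fun t ↦ arcsin ((2 * t - a - b) / (b - a))) (√(t - a) * √(b - t))⁻¹ t := by
  have hat : 0 < t - a := sub_pos.2 ht.1
  have htb : 0 < b - t := sub_pos.2 ht.2
  have hab : 0 < b - a := by linarith
  have haffine : HasDerivAt (fun t ↦ (2 * t - a - b) / (b - a)) (2 / (b - a)) t := by
    simpa using ((((hasDerivAt_id t).const_mul 2).sub_const a).sub_const b).div_const (b - a)
  have hne_neg_one : (2 * t - a - b) / (b - a) ≠ -1 := by
    rw [Ne, div_eq_iff hab.ne']
    intro h
    linarith
  have hne_one : (2 * t - a - b) / (b - a) ≠ 1 := by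
    rw [Ne, div_eq_iff hab.ne']
    intro h
    linarith
  have hsqrt : √(1 - ((2 * t - a - b) / (b - a)) ^ 2) = 2 * (√(t - a) * √(b - t)) / (b - a) := by
    rw [sqrt_eq_iff_mul_self_eq_of_pos (by positivity), ← pow_two, div_pow, mul_pow, mul_pow,
      sq_sqrt hat.le, sq_sqrt htb.le]
    field_simp
    ring
  refine ((hasDerivAt_arcsin hne_neg_one hne_one).comp t haffine).congr_deriv ?_
  rw [hsqrt]
  field_simp

lemma hasDerivAt_abelKernelPrimitive (hs : 0 ≤ s) (hx : x ∈ Ioo s r) :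
    HasDerivAt (abelKernelPrimitive s r) (abelKernel s r x) x := by
  have hx_sq : x ^ 2 ∈ Ioo (s ^ 2) (r ^ 2) :=
    ⟨pow_lt_pow_left₀ hx.1 hs two_ne_zero, pow_lt_pow_left₀ hx.2 (hs.trans hx.1.le) two_ne_zero⟩
  have hcomp := (hasDerivAt_arcsin_affine hx_sq).comp_of_eq x (hasDerivAt_pow 2 x) rfl
  refine (hcomp.div_const 2).congr_deriv ?_
  simp only [abelKernel, mul_inv, div_eq_mul_inv]
  ring

lemma continuous_abelKernelPrimitive (s r : ℝ) : Continuous (abelKernelPrimitive s r) := by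
  unfold abelKernelPrimitive
  fun_prop

lemma integrableOn_abelKernel_Ioc (hs : 0 ≤ s) : IntegrableOn (abelKernel s r) (Ioc s r) :=
  integrableOn_deriv_of_nonneg (continuous_abelKernelPrimitive s r).continuousOn
    (fun _ hx ↦ hasDerivAt_abelKernelPrimitive hs hx)
    fun _ hx ↦ abelKernel_nonneg (hs.trans hx.1.le)

lemma setIntegral_abelKernel_Ioc (hs : 0 ≤ s) (hsr : s < r) :
    ∫ x in Ioc s r, abelKernel s r x = π / 2 := by
  have hsq : r ^ 2 - s ^ 2 ≠ 0 := (sub_pos.2 (pow_lt_pow_left₀ hsr hs two_ne_zero)).ne'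
  have hupper : (2 * r ^ 2 - s ^ 2 - r ^ 2) / (r ^ 2 - s ^ 2) = 1 := by
    rw [div_eq_iff hsq]
    ring
  have hlower : (2 * s ^ 2 - s ^ 2 - r ^ 2) / (r ^ 2 - s ^ 2) = -1 := by
    rw [div_eq_iff hsq]
    ring
  rw [← integral_of_le hsr.le,
    integral_eq_sub_of_hasDerivAt_of_le hsr.le (continuous_abelKernelPrimitive s r).continuousOn
      (fun _ hx ↦ hasDerivAt_abelKernelPrimitive hs hx)
      ((intervalIntegrable_iff_integrableOn_Ioc_of_le hsr.le).2 (integrableOn_abelKernel_Ioc hs)),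
    abelKernelPrimitive, abelKernelPrimitive, hupper, hlower, arcsin_one, arcsin_neg_one]
  ring

lemma abelKernel_eq_zero_of_mem_diff (hr : 0 ≤ r) (hx : x ∈ Ioc s δ \ Ioc s r) :
    abelKernel s r x = 0 :=
  abelKernel_eq_zero hr (not_le.1 fun hxr ↦ hx.2 ⟨hx.1.1, hxr⟩).le

lemma integrableOn_abelKernel (hs : 0 ≤ s) (hr : 0 ≤ r) :
    IntegrableOn (abelKernel s r) (Ioc s δ) :=
  (integrableOn_abelKernel_Ioc hs).of_forall_sdiff_eq_zero measurableSet_Ioc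
    fun _ hx ↦ abelKernel_eq_zero_of_mem_diff hr hx

lemma setIntegral_abelKernel (hs : 0 ≤ s) (hr : r ∈ Ioc s δ) :
    ∫ x in Ioc s δ, abelKernel s r x = π / 2 := by
  rw [← setIntegral_abelKernel_Ioc hs hr.1]
  exact setIntegral_eq_of_subset_of_forall_sdiff_eq_zero measurableSet_Ioc
    (Ioc_subset_Ioc_right hr.2) fun _ hx ↦ abelKernel_eq_zero_of_mem_diff (hs.trans hr.1.le) hx

end Kernel

section Inversion

variable {E : Type*} [NormedAddCommGroup E] [NormedSpace ℝ E] {s δ a b : ℝ} {f g : ℝ → E}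

lemma integrable_abelKernel_smul (hs : 0 ≤ s) (hg : IntegrableOn g (Ioc s δ)) :
    Integrable (fun p : ℝ × ℝ ↦ abelKernel s p.2 p.1 • g p.2)
      ((volume.restrict (Ioc s δ)).prod (volume.restrict (Ioc s δ))) := by
  have hmeas : AEStronglyMeasurable (fun p : ℝ × ℝ ↦ abelKernel s p.2 p.1 • g p.2)
      ((volume.restrict (Ioc s δ)).prod (volume.restrict (Ioc s δ))) :=
    (measurable_abelKernel s).aestronglyMeasurable.smul hg.aestronglyMeasurable.comp_snd
  refine (integrable_prod_iff' hmeas).2 ⟨?_, ?_⟩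
  · filter_upwards [ae_restrict_mem measurableSet_Ioc] with r hr
    exact (integrableOn_abelKernel hs (hs.trans hr.1.le)).smul_const (g r)
  · refine (hg.norm.const_mul (π / 2)).congr ?_
    filter_upwards [ae_restrict_mem measurableSet_Ioc] with r hr
    rw [← setIntegral_abelKernel hs hr, ← MeasureTheory.integral_mul_const]
    refine setIntegral_congr_fun measurableSet_Ioc fun x hx ↦ ?_
    rw [norm_smul, norm_of_nonneg (abelKernel_nonneg (hs.trans hx.1.le))]

lemma setIntegral_abelKernel_smul_eq (hs : 0 ≤ s) {x : ℝ} (hx : x ∈ Ioc s δ) :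
    ∫ r in Ioc s δ, abelKernel s r x • r • f r
      = (x / √(x ^ 2 - s ^ 2)) • abelTransform δ f x := by
  have hvanish : ∀ r ∈ Ioc s δ \ Ioc x δ, (√(r ^ 2 - x ^ 2))⁻¹ • r • f r = 0 := fun r hr ↦ by
    have hrx : r ≤ x := not_lt.1 fun hxr ↦ hr.2 ⟨hxr, hr.1.2⟩
    rw [inv_sqrt_sq_sub_sq_eq_zero (hs.trans hr.1.1.le) hrx, zero_smul]
  simp only [abelKernel, mul_smul]
  rw [MeasureTheory.integral_smul, abelTransform, integral_of_le hx.2,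
    setIntegral_eq_of_subset_of_forall_sdiff_eq_zero measurableSet_Ioc
      (Ioc_subset_Ioc_left hx.1.le) hvanish]

variable [CompleteSpace E]

theorem integral_smul_abelTransform (hs : 0 ≤ s) (hsδ : s ≤ δ)
    (hf : IntervalIntegrable (fun r ↦ r • f r) volume s δ) :
    ∫ x in s..δ, (x / √(x ^ 2 - s ^ 2)) • abelTransform δ f x
      = (π / 2) • ∫ r in s..δ, r • f r := by
  rw [intervalIntegrable_iff_integrableOn_Ioc_of_le hsδ] at hf
  rw [integral_of_le hsδ, integral_of_le hsδ, ← MeasureTheory.integral_smul]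
  calc ∫ x in Ioc s δ, (x / √(x ^ 2 - s ^ 2)) • abelTransform δ f x
      = ∫ x in Ioc s δ, ∫ r in Ioc s δ, abelKernel s r x • r • f r :=
        setIntegral_congr_fun measurableSet_Ioc fun _ hx ↦
          (setIntegral_abelKernel_smul_eq hs hx).symm
    _ = ∫ r in Ioc s δ, ∫ x in Ioc s δ, abelKernel s r x • r • f r :=
        integral_integral_swap (integrable_abelKernel_smul hs hf)
    _ = ∫ r in Ioc s δ, (π / 2) • r • f r :=
        setIntegral_congr_fun measurableSet_Ioc fun r hr ↦ by
          rw [_root_.integral_smul_const, setIntegral_abelKernel hs hr]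

lemma ae_eq_zero_of_forall_integral_eq_zero (hg : IntervalIntegrable g volume a b)
    (hzero : ∀ s ∈ Icc a b, ∫ r in s..b, g r = 0) : g =ᵐ[volume.restrict (Icc a b)] 0 := by
  rw [← Measure.restrict_congr_set Ioo_ae_eq_Icc, Filter.EventuallyEq,
    ae_restrict_iff' measurableSet_Ioo]
  filter_upwards [hg.ae_hasDerivAt_integral] with s hderiv hs
  have hprimitive : (fun u ↦ ∫ r in b..u, g r) =ᶠ[nhds s] fun _ ↦ 0 := by
    filter_upwards [Ioo_mem_nhds hs.1 hs.2] with u hu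
    rw [integral_symm, hzero u (Ioo_subset_Icc_self hu), neg_zero]
  exact (hderiv (Icc_subset_uIcc (Ioo_subset_Icc_self hs)) b right_mem_uIcc).unique
    ((hasDerivAt_const s 0).congr_of_eventuallyEq hprimitive)

theorem abel_transform_injective_general (ha : 0 ≤ a)
    (hf : IntervalIntegrable (fun r ↦ r • f r) volume a δ)
    (hzero : abelTransform δ f =ᵐ[volume.restrict (Icc a δ)] 0) :
    f =ᵐ[volume.restrict (Icc a δ)] 0 := by
  have htail : ∀ s ∈ Icc a δ, ∫ r in s..δ, r • f r = 0 := fun s hs ↦ by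
    have hsub : Ioc s δ ⊆ Icc a δ := fun x hx ↦ ⟨hs.1.trans hx.1.le, hx.2⟩
    have hinv := integral_smul_abelTransform (ha.trans hs.1) hs.2
      (hf.mono_set (uIcc_subset_uIcc_right (Icc_subset_uIcc hs)))
    have hleft : ∫ x in s..δ, (x / √(x ^ 2 - s ^ 2)) • abelTransform δ f x = 0 := by
      rw [integral_of_le hs.2]
      refine integral_eq_zero_of_ae ?_
      filter_upwards [ae_restrict_of_ae_restrict_of_subset hsub hzero] with x hx
      rw [hx, Pi.zero_apply, smul_zero]
    exact (smul_eq_zero.1 (hinv.symm.trans hleft)).resolve_left pi_div_two_pos.ne'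
  filter_upwards [ae_eq_zero_of_forall_integral_eq_zero hf htail,
    Measure.ae_ne (volume.restrict (Icc a δ)) 0] with r hr hr0
  exact (smul_eq_zero.1 hr).resolve_left hr0

end Inversion

/-- Injectivity of the single-view axially-symmetric forward operator: if the Abel
transform of a continuous function `f` supported on `[0, δ]` vanishes for every offset
`x ∈ [0, δ]`, then `f` vanishes on `[0, δ]`.  This is the claim `Null(A) = {0}` used to
verify the hypothesis `Null(∇) ∩ Null(A) = {0}` of the paper's convergence theorem. -/
theorem abel_transform_injective (δ : ℝ) (hδ : 0 < δ) (f : ℝ → ℝ)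
    (hf : ContinuousOn f (Set.Icc 0 δ))
    (h : ∀ x : ℝ, 0 ≤ x → x ≤ δ →
      ∫ r in x..δ, r * f r / Real.sqrt (r ^ 2 - x ^ 2) = 0) :
    ∀ r ∈ Set.Icc (0 : ℝ) δ, f r = 0 := by
  have hae : f =ᵐ[volume.restrict (Icc 0 δ)] 0 :=
    abel_transform_injective_general le_rfl
      ((continuousOn_id.smul hf).intervalIntegrable_of_Icc hδ.le)
      (ae_restrict_of_forall_mem measurableSet_Icc fun x hx ↦ by
        simpa only [abelTransform, smul_eq_mul, inv_mul_eq_div, Pi.zero_apply] using h x hx.1 hx.2)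
  exact Measure.eqOn_Icc_of_ae_eq volume hδ.ne hae hf continuousOn_const
end
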